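/- Let $X \sim \mathcal{N}(0, I_d)$, and let $A = O + D$ be a symmetric $d \times d$ matrix where $D = \mathrm{diag}(\alpha)$ with $\alpha_i = A_{ii}$ and $O$ is the off-diagonal part with eigenvalues $\lambda = (\lambda_1, \ldots, \lambda_d)$. Then for all $t > 0$, $\mathbb{P}(X^T A X - \mathbb{E}[X^T A X] \geq t) \leq 2\exp\big(-\frac{t}{16}\min\{\frac{t}{2\|\alpha\|_2^2}, \frac{1}{\|\alpha\|_\infty}, \frac{t}{2\|\lambda\|_2^2}, \frac{1}{\|\lambda\|_\infty}\}\big)$. -/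

import Mathlib

open MeasureTheory Real ProbabilityTheory

lemma aux_log {v : ℝ} (hv : |v| ≤ 1/2) : exp (-v - v^2) ≤ 1 - v := by
  obtain ⟨h1, h2⟩ := abs_le.mp hv
  rcases le_total 0 v with h | h
  · have h3 := quadratic_le_exp_of_nonneg (x := v + v^2) (by positivity)
    have h4 : exp (-v - v^2) * exp (v + v^2) = 1 := by
      rw [← exp_add]; simp
    have h5 : 1 ≤ (1 - v) * exp (v + v^2) := by
      refine le_trans ?_ (mul_le_mul_of_nonneg_left h3 (by linarith))
      have : 0 ≤ 1 - v - v^2 - v^3 := by nlinarith [mul_nonneg h h, mul_nonneg (mul_nonneg h h) h]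
      nlinarith [mul_nonneg (sq_nonneg v) this]
    have h6 := exp_pos (v + v^2)
    refine le_of_mul_le_mul_right ?_ h6
    rw [h4]; exact h5
  · have h3 := abs_exp_sub_one_sub_id_le (x := -v - v^2) (by
      rw [abs_le]; constructor <;> nlinarith)
    have h4 := (abs_le.mp h3).2
    have : (1 + v)^2 ≤ 1 := by nlinarith
    nlinarith [mul_nonneg (sq_nonneg v) (sub_nonneg.2 this)]

lemma gauss_integrable {u : ℝ} (hu : 2 * u < 1) :
    Integrable (fun x : ℝ => exp (u * x^2)) (gaussianReal 0 1) := by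
  rw [gaussianReal_of_var_ne_zero _ one_ne_zero, integrable_withDensity_iff_integrable_smul₀' (by fun_prop) (by simp [gaussianPDF])]
  have := (integrable_exp_neg_mul_sq (b := 1/2 - u) (by linarith)).const_mul ((√(2 * π))⁻¹)
  refine this.congr (Filter.Eventually.of_forall fun x => ?_)
  simp only [toReal_gaussianPDF, smul_eq_mul, gaussianPDFReal]
  simp only [NNReal.coe_one, mul_one, sub_zero, mul_assoc, ← exp_add]
  congr 2; ring

lemma gauss_mgf {u : ℝ} (hu : 2 * u < 1) :
    ∫ x, exp (u * x^2) ∂(gaussianReal 0 1) = (√(1 - 2 * u))⁻¹ := by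
  rw [integral_gaussianReal_eq_integral_smul one_ne_zero]
  have : ∀ x : ℝ, gaussianPDFReal 0 1 x • exp (u * x^2) = (√(2 * π))⁻¹ * exp (-(1/2 - u) * x^2) := by
    intro x
    simp only [smul_eq_mul, gaussianPDFReal]
    simp only [NNReal.coe_one, mul_one, sub_zero, mul_assoc, ← exp_add]
    congr 2; ring
  simp_rw [this]
  rw [integral_const_mul, integral_gaussian, ← sqrt_inv, ← sqrt_inv, ← sqrt_mul (by positivity)]
  congr 1
  have := pi_pos
  have : 1 - 2 * u ≠ 0 := by linarith
  have : 1 / 2 - u ≠ 0 := by intro h; apply this; linarith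
  field_simp
  try ring

lemma gauss_mgf_le {u : ℝ} (hu : |u| ≤ 1/4) :
    ∫ x, exp (u * x^2) ∂(gaussianReal 0 1) ≤ exp (u + 2 * u^2) := by
  obtain ⟨h1, h2⟩ := abs_le.mp hu
  rw [gauss_mgf (by linarith)]
  have h := aux_log (v := 2 * u) (by rw [abs_mul]; norm_num; linarith)
  have h3 : exp (-(u + 2*u^2)) ≤ √(1 - 2 * u) := by
    apply Real.le_sqrt_of_sq_le
    rw [← exp_nat_mul]
    refine le_trans (le_of_eq ?_) h
    congr 1; push_cast; ring
  rw [show exp (u + 2*u^2) = (exp (-(u + 2*u^2)))⁻¹ by rw [exp_neg, inv_inv]]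
  exact inv_anti₀ (exp_pos _) h3

lemma diag_tail {d : ℕ} (c : Fin d → ℝ) (hc : 0 < ∑ i, c i ^ 2) {s : ℝ} (hs : 0 < s) :
    (Measure.pi fun _ : Fin d => gaussianReal 0 1)
      {x | s ≤ ∑ i, c i * (x i ^ 2 - 1)} ≤
      ENNReal.ofReal (exp (-(s / 8) * min (s / ∑ i, c i ^ 2) (1 / ⨆ i, |c i|))) := by
  set V := ∑ i, c i ^ 2 with hV
  set M := ⨆ i, |c i| with hM
  have hle : ∀ i, |c i| ≤ M := fun i => le_ciSup (f := fun i => |c i|) (Finite.bddAbove_range _) i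
  have hMpos : 0 < M := by
    obtain ⟨i, -, hi⟩ := Finset.exists_ne_zero_of_sum_ne_zero hc.ne'
    exact lt_of_lt_of_le (abs_pos.2 (by simpa using hi)) (hle i)
  set m := min (s / V) (1 / M) with hm
  have hmpos : 0 < m := by positivity
  set θ := m / 4 with hθ
  have hu : ∀ i, |θ * c i| ≤ 1/4 := by
    intro i
    rw [abs_mul, abs_of_pos (by positivity)]
    calc θ * |c i| ≤ (1 / M / 4) * M := by
          gcongr
          · rw [hθ]; gcongr; exact min_le_right _ _
          · exact hle i
      _ = 1/4 := by field_simp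
  set P := (Measure.pi fun _ : Fin d => gaussianReal 0 1)
  have hexp : ∀ x : Fin d → ℝ, exp (θ * ∑ i, c i * (x i ^ 2 - 1)) =
      ∏ i, (exp (-(θ * c i)) * exp ((θ * c i) * x i ^ 2)) := by
    intro x
    simp_rw [← exp_add]
    rw [← exp_sum, Finset.mul_sum]
    congr 1
    refine Finset.sum_congr rfl fun i _ => ?_
    ring
  have hint : Integrable (fun x : Fin d → ℝ => exp (θ * ∑ i, c i * (x i ^ 2 - 1))) P := by
    simp_rw [hexp]
    exact Integrable.fintype_prod (f := fun i (y : ℝ) => exp (-(θ * c i)) * exp ((θ * c i) * y ^ 2))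
      fun i => (gauss_integrable (by have := abs_le.mp (hu i); linarith)).const_mul _
  have hmgf : mgf (fun x : Fin d → ℝ => ∑ i, c i * (x i ^ 2 - 1)) P θ ≤ exp (2 * θ^2 * V) := by
    unfold mgf
    simp_rw [hexp]
    rw [integral_fintype_prod_eq_prod (𝕜 := ℝ)
      (fun i (y : ℝ) => exp (-(θ * c i)) * exp ((θ * c i) * y ^ 2)), hV, Finset.mul_sum, exp_sum]
    refine Finset.prod_le_prod (fun i _ => integral_nonneg fun x => by positivity) fun i _ => ?_
    rw [integral_const_mul]
    calc _ ≤ exp (-(θ * c i)) * exp (θ * c i + 2 * (θ * c i)^2) := by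
          gcongr; exact gauss_mgf_le (hu i)
      _ = _ := by rw [← exp_add]; congr 1; ring
  have key := measure_ge_le_exp_mul_mgf (μ := P) s (t := θ) (by positivity) hint
  rw [← ofReal_measureReal]
  apply ENNReal.ofReal_le_ofReal
  refine key.trans ?_
  calc _ ≤ exp (-θ * s) * exp (2 * θ^2 * V) := by gcongr
    _ ≤ _ := by
      rw [← exp_add]
      gcongr
      have : m * V ≤ s := by
        have : m ≤ s / V := min_le_left _ _
        rwa [le_div_iff₀ hc] at this
      have := mul_le_mul_of_nonneg_left this hmpos.le
      rw [hθ]; nlinarith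

lemma gauss_second (d : ℕ) (i j : Fin d) :
    Integrable (fun y : Fin d → ℝ => y i * y j) (Measure.pi fun _ : Fin d => gaussianReal 0 1) ∧
    ∫ y : Fin d → ℝ, y i * y j ∂(Measure.pi fun _ : Fin d => gaussianReal 0 1)
      = if i = j then 1 else 0 := by
  have hmp : ∀ k : Fin d, MeasurePreserving (fun y : Fin d → ℝ => y k)
    (Measure.pi fun _ : Fin d => gaussianReal 0 1) (gaussianReal 0 1) := fun k =>
      measurePreserving_eval (fun _ : Fin d => gaussianReal 0 1) k
  have h2 : ∀ k : Fin d, MemLp (fun y : Fin d → ℝ => y k) 2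
    (Measure.pi fun _ : Fin d => gaussianReal 0 1) := fun k =>
      (memLp_id_gaussianReal (μ := 0) (v := 1) 2).comp_measurePreserving (hmp k)
  refine ⟨(h2 i).integrable_mul (h2 j), ?_⟩
  have hmean : ∀ k : Fin d, ∫ y : Fin d → ℝ, y k ∂(Measure.pi fun _ : Fin d => gaussianReal 0 1) = 0 := by
    intro k
    have := (hmp k).hasLaw.integral_eq
    simpa using this
  split_ifs with h
  · subst h
    have hv := variance_of_integral_eq_zero (h2 i).aemeasurable (hmean i)
    have := (hmp i).hasLaw.variance_eq
    rw [variance_id_gaussianReal] at this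
    rw [this] at hv
    simp_rw [← sq]
    simpa using hv.symm
  · have hind := (iIndepFun_pi (X := fun (_ : Fin d) (x : ℝ) => x) (μ := fun _ : Fin d => gaussianReal 0 1)
      (fun _ => by fun_prop)).indepFun h
    have := hind.integral_fun_mul_eq_mul_integral (h2 i).1 (h2 j).1
    rw [this, hmean]; simp

lemma gauss_quad {d : ℕ} (A : Matrix (Fin d) (Fin d) ℝ) :
    ∫ y : Fin d → ℝ, (∑ i, ∑ j, A i j * y i * y j)
      ∂(Measure.pi fun _ : Fin d => gaussianReal 0 1) = ∑ i, A i i := by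
  simp_rw [mul_assoc]
  rw [integral_finsetSum]
  · refine Finset.sum_congr rfl fun i _ => ?_
    rw [integral_finsetSum]
    · simp_rw [integral_const_mul, (gauss_second d _ _).2]
      simp
    · exact fun j _ => (gauss_second d i j).1.const_mul _
  · exact fun i _ => integrable_finsetSum _ fun j _ => (gauss_second d i j).1.const_mul _

lemma rot_mp {d : ℕ} (b : OrthonormalBasis (Fin d) ℝ (EuclideanSpace ℝ (Fin d))) :
    MeasurePreserving (fun x : Fin d → ℝ => WithLp.ofLp (∑ i, x i • b i))
      (Measure.pi fun _ : Fin d => gaussianReal 0 1) (Measure.pi fun _ : Fin d => gaussianReal 0 1) := by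
  refine ⟨by fun_prop, ?_⟩
  have h := stdGaussian_eq_map_pi_orthonormalBasis b
  rw [← map_pi_eq_stdGaussian] at h
  have h' := congrArg (Measure.map (WithLp.ofLp)) h
  rw [Measure.map_map (by fun_prop) (by fun_prop), Measure.map_map (by fun_prop) (by fun_prop)] at h'
  have e : (WithLp.ofLp ∘ WithLp.toLp 2 : (Fin d → ℝ) → (Fin d → ℝ)) = id := rfl
  rw [e, Measure.map_id] at h'
  exact h'.symm

lemma rot_quad {d : ℕ} {O : Matrix (Fin d) (Fin d) ℝ} (hO : O.IsHermitian) (x : Fin d → ℝ) :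
    (∑ i, ∑ j, O i j * (WithLp.ofLp (∑ k, x k • hO.eigenvectorBasis k)) i *
      (WithLp.ofLp (∑ k, x k • hO.eigenvectorBasis k)) j) = ∑ i, hO.eigenvalues i * x i ^ 2 := by
  set b := hO.eigenvectorBasis with hb
  set y := ∑ k, x k • b k with hy
  have h1 : O.mulVec (WithLp.ofLp y) = WithLp.ofLp (∑ k, (hO.eigenvalues k * x k) • b k) := by
    rw [hy]
    simp only [WithLp.ofLp_sum, WithLp.ofLp_smul, Matrix.mulVec_sum, Matrix.mulVec_smul]
    refine Finset.sum_congr rfl fun k _ => ?_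
    rw [hb, hO.mulVec_eigenvectorBasis, smul_smul, mul_comm]
  have h2 : inner ℝ y (∑ k, (hO.eigenvalues k * x k) • b k) = ∑ i, hO.eigenvalues i * x i ^ 2 := by
    rw [hy, b.orthonormal.inner_sum]
    refine Finset.sum_congr rfl fun k _ => ?_
    simp; ring
  rw [← h2, PiLp.inner_apply, ← h1]
  refine Finset.sum_congr rfl fun k _ => ?_
  simp only [Matrix.mulVec, dotProduct, RCLike.inner_apply, conj_trivial, Finset.sum_mul]
  refine Finset.sum_congr rfl fun k _ => ?_
  ring

lemma off_tail {d : ℕ} {O : Matrix (Fin d) (Fin d) ℝ} (hO : O.IsHermitian) (htr : O.trace = 0)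
    (hc : 0 < ∑ i, hO.eigenvalues i ^ 2) {s : ℝ} (hs : 0 < s) :
    (Measure.pi fun _ : Fin d => gaussianReal 0 1)
      {x | s ≤ ∑ i, ∑ j, O i j * x i * x j} ≤
      ENNReal.ofReal (exp (-(s / 8) *
        min (s / ∑ i, hO.eigenvalues i ^ 2) (1 / ⨆ i, |hO.eigenvalues i|))) := by
  refine le_trans (le_of_eq ?_) (diag_tail hO.eigenvalues hc hs)
  have hmeas : MeasurableSet {x : Fin d → ℝ | s ≤ ∑ i, ∑ j, O i j * x i * x j} :=
    measurableSet_le (by fun_prop) (by fun_prop)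
  rw [← (rot_mp hO.eigenvectorBasis).measure_preimage hmeas.nullMeasurableSet]
  congr 1
  ext x
  simp only [Set.mem_preimage, Set.mem_ofPred_eq]
  rw [rot_quad hO x]
  have : ∑ i, hO.eigenvalues i = 0 := by
    have := hO.trace_eq_sum_eigenvalues
    rw [htr] at this
    simpa using this.symm
  simp [mul_sub, this]

/-- Gaussian chaos (Hanson–Wright type) concentration for `XᵀAX` with
`X ~ N(0, I_d)`, in terms of the diagonal entries `α` of `A` and the
eigenvalues `λ` of the off-diagonal part `O = A - diag(α)`. -/
theorem stmt_7 (d : ℕ) (A : Matrix (Fin d) (Fin d) ℝ) (hA : A.IsSymm)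
    (hO : (A - Matrix.diagonal fun i => A i i).IsHermitian) (t : ℝ) (ht : 0 < t) :
    (Measure.pi fun _ : Fin d => gaussianReal 0 1)
        {x | (∑ i, ∑ j, A i j * x i * x j) -
              (∫ y : Fin d → ℝ, (∑ i, ∑ j, A i j * y i * y j)
                ∂(Measure.pi fun _ : Fin d => gaussianReal 0 1)) ≥ t}
      ≤ ENNReal.ofReal (2 * Real.exp (-(t / 16) *
          min (min (t / (2 * ∑ i, (A i i) ^ 2)) (1 / ⨆ i, |A i i|))
              (min (t / (2 * ∑ i, (hO.eigenvalues i) ^ 2)) (1 / ⨆ i, |hO.eigenvalues i|)))) := by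
  rw [gauss_quad]
  set m := min (min (t / (2 * ∑ i, (A i i) ^ 2)) (1 / ⨆ i, |A i i|))
              (min (t / (2 * ∑ i, (hO.eigenvalues i) ^ 2)) (1 / ⨆ i, |hO.eigenvalues i|)) with hm
  have htriv : m ≤ 0 → (Measure.pi fun _ : Fin d => gaussianReal 0 1)
        {x | (∑ i, ∑ j, A i j * x i * x j) - ∑ i, A i i ≥ t} ≤
        ENNReal.ofReal (2 * exp (-(t / 16) * m)) := by
    intro h
    refine prob_le_one.trans ?_
    rw [ENNReal.one_le_ofReal]
    have : 1 ≤ exp (-(t / 16) * m) := one_le_exp (by nlinarith)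
    linarith
  rcases (Finset.sum_nonneg fun i _ => sq_nonneg (A i i) : 0 ≤ ∑ i, A i i ^ 2).eq_or_lt with h1 | h1
  · apply htriv
    rw [hm, ← h1]
    exact (min_le_left _ _).trans ((min_le_left _ _).trans (by simp))
  rcases (Finset.sum_nonneg fun i _ => sq_nonneg (hO.eigenvalues i) :
      0 ≤ ∑ i, hO.eigenvalues i ^ 2).eq_or_lt with h2 | h2
  · apply htriv
    rw [hm, ← h2]
    exact (min_le_right _ _).trans ((min_le_left _ _).trans (by simp))
  have hD := diag_tail (fun i => A i i) h1 (half_pos ht)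
  have hE := off_tail hO (by simp [Matrix.trace]) h2 (half_pos ht)
  have hsub : {x : Fin d → ℝ | (∑ i, ∑ j, A i j * x i * x j) - ∑ i, A i i ≥ t} ⊆
      {x | t / 2 ≤ ∑ i, A i i * (x i ^ 2 - 1)} ∪
      {x | t / 2 ≤ ∑ i, ∑ j, (A - Matrix.diagonal fun i => A i i) i j * x i * x j} := by
    intro x hx
    simp only [Set.mem_ofPred_eq, Set.mem_union] at hx ⊢
    by_contra! hcon
    have e : ∑ i, ∑ j, (A - Matrix.diagonal fun i => A i i) i j * x i * x j =
        (∑ i, ∑ j, A i j * x i * x j) - ∑ i, A i i * x i ^ 2 := by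
      rw [← Finset.sum_sub_distrib]
      refine Finset.sum_congr rfl fun i _ => ?_
      simp [sub_mul, Matrix.diagonal_apply, Finset.sum_sub_distrib]
      ring
    have e2 : ∑ i, A i i * (x i ^ 2 - 1) = ∑ i, A i i * x i ^ 2 - ∑ i, A i i := by
      rw [← Finset.sum_sub_distrib]
      exact Finset.sum_congr rfl fun i _ => by ring
    linarith [hcon.1, hcon.2]
  refine (measure_mono hsub).trans ((measure_union_le _ _).trans ((add_le_add hD hE).trans ?_))
  rw [← ENNReal.ofReal_add (exp_pos _).le (exp_pos _).le]
  apply ENNReal.ofReal_le_ofReal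
  rw [two_mul]
  have c1 : m ≤ min (t / 2 / ∑ i, A i i ^ 2) (1 / ⨆ i, |A i i|) := by
    rw [div_div]; exact min_le_left _ _
  have c2 : m ≤ min (t / 2 / ∑ i, hO.eigenvalues i ^ 2) (1 / ⨆ i, |hO.eigenvalues i|) := by
    rw [div_div]; exact min_le_right _ _
  apply add_le_add <;> apply exp_le_exp.2 <;> nlinarith
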